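/- Second-order operadic Stokes law: for every bilinear map μ ∈ C² and all multilinear maps h ∈ C^m, f ∈ C^n, g ∈ C^p, δ_μ⟨h|fg⟩ − ⟨h|f(δ_μ g)⟩ − (−1)^{|g|}⟨h|(δ_μ f)g⟩ − (−1)^{|g|+|f|}⟨(δ_μ h)|fg⟩ = (−1)^{|g|} ((h ∘ f) ⌣ g + (−1)^{|h| n} f ⌣ (h ∘ g) − h ∘ (f ⌣ g)), where |h| = m − 1, |f| = n − 1, |g| = p − 1. -/

import Mathlib

open Finset

section OperadPrelude

variable {K : Type*} [CommRing K] {L : Type*} [AddCommGroup L] [Module K L]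

/-- `C K L n`: the `K`-module of `n`-multilinear maps `L^n → L`
(the degree-`n` component of the endomorphism operad of `L`). -/
abbrev C (K L : Type*) [CommRing K] [AddCommGroup L] [Module K L] (n : ℕ) :=
  MultilinearMap K (fun _ : Fin n => L) L

/-- The extension of an `n`-ary multilinear operation to sequences `ℕ → L`:
it evaluates `f` on the first `n` entries of the sequence.  Two `n`-ary
multilinear operations are equal iff their extensions are equal, so operadic
identities are stated as identities between extensions. -/
def ex {n : ℕ} (f : C K L n) : (ℕ → L) → L := fun x => f fun j => x j.1

/-- The sign `(-1)^e` for an integer exponent `e`. -/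
def sgn (e : ℤ) : ℤ := (((-1 : ℤˣ) ^ e : ℤˣ) : ℤ)

/-- Partial composition `f ∘ᵢ g`, where `n = deg g`:
`(f ∘ᵢ g)(x₀, x₁, …) = (-1)^{i(n-1)} f(x₀,…,x_{i-1}, g(x_i,…,x_{i+n-1}), x_{i+n},…)`. -/
def pc (n i : ℕ) (f g : (ℕ → L) → L) : (ℕ → L) → L :=
  fun x => sgn ((i : ℤ) * ((n : ℤ) - 1)) •
    f fun j => if j < i then x j else if j = i then g (fun k => x (i + k)) else x (j + n - 1)

/-- Total composition `f ∘ g := Σ_{i=0}^{m-1} f ∘ᵢ g`, where `m = deg f`, `n = deg g`. -/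
def tc (m n : ℕ) (f g : (ℕ → L) → L) : (ℕ → L) → L :=
  fun x => ∑ i ∈ Finset.range m, pc n i f g x

/-- The associator `(h, f, g) := (h ∘ f) ∘ g − h ∘ (f ∘ g)` of the total composition,
where `m = deg h`, `n = deg f`, `p = deg g`. -/
def assoc (m n p : ℕ) (h f g : (ℕ → L) → L) : (ℕ → L) → L :=
  fun x => tc (m + n - 1) p (tc m n h f) g x - tc m (n + p - 1) h (tc n p f g) x

/-- The brace `⟨h|fg⟩ := Σ (h ∘ᵢ f) ∘ⱼ g`, summed over `0 ≤ i ≤ m-2`,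
`i + n ≤ j ≤ m + n - 2`, where `m = deg h`, `n = deg f`, `p = deg g`. -/
def br2 (m n p : ℕ) (h f g : (ℕ → L) → L) : (ℕ → L) → L :=
  fun x => ∑ i ∈ Finset.range (m - 1), ∑ j ∈ Finset.Icc (i + n) (m + n - 2),
    pc p j (pc n i h f) g x

/-- The triple brace `⟨h|fgb⟩ := Σ ((h ∘ᵢ f) ∘ⱼ g) ∘ₖ b`, summed over `0 ≤ i ≤ m-3`,
`i + n ≤ j ≤ m + n - 3`, `j + p ≤ k ≤ m + n + p - 3`, where
`m = deg h`, `n = deg f`, `p = deg g`, `q = deg b`. -/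
def br3 (m n p q : ℕ) (h f g b : (ℕ → L) → L) : (ℕ → L) → L :=
  fun x => ∑ i ∈ Finset.range (m - 2), ∑ j ∈ Finset.Icc (i + n) (m + n - 3),
    ∑ k ∈ Finset.Icc (j + p) (m + n + p - 3),
      pc q k (pc p j (pc n i h f) g) b x

/-- The Gerstenhaber bracket `[f,g] := f ∘ g − (-1)^{|f||g|} g ∘ f`,
where `m = deg f`, `n = deg g`, `|f| = m - 1`, `|g| = n - 1`. -/
def gb (m n : ℕ) (f g : (ℕ → L) → L) : (ℕ → L) → L :=
  fun x => tc m n f g x - sgn (((m : ℤ) - 1) * ((n : ℤ) - 1)) • tc n m g f x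

/-- The cup product `f ⌣ g := (-1)^{deg f} (μ ∘₀ f) ∘_{deg f} g`,
where `m = deg f`, `n = deg g`. -/
def cup (μ : C K L 2) (m n : ℕ) (f g : (ℕ → L) → L) : (ℕ → L) → L :=
  fun x => sgn (m : ℤ) • pc n m (pc m 0 (ex μ) f) g x

/-- The coboundary operator `δ_μ f := −[f, μ]`, where `m = deg f`. -/
def delta (μ : C K L 2) (m : ℕ) (f : (ℕ → L) → L) : (ℕ → L) → L :=
  fun x => - gb m 2 f (ex μ) x



section helpers

theorem sgn_eq (e : ℤ) : sgn e = if Even e then 1 else -1 := by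
  unfold sgn
  rcases Int.even_or_odd e with h | h
  · simp [h, h.neg_one_zpow]
  · have : ¬ Even e := by simpa using h
    simp [this, h.neg_one_zpow]

theorem sgn_add (a b : ℤ) : sgn (a + b) = sgn a * sgn b := by
  simp [sgn, zpow_add]

theorem sgn_sq (a : ℤ) : sgn a * sgn a = 1 := by
  rw [sgn_eq]; split_ifs <;> simp

/-- `F` depends only on the first `n` entries. -/
def Ar (n : ℕ) (F : (ℕ → L) → L) : Prop := ∀ x y : ℕ → L, (∀ i < n, x i = y i) → F x = F y

/-- `F` is additive in slot `j`. -/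
def Ad (j : ℕ) (F : (ℕ → L) → L) : Prop :=
  ∀ (x : ℕ → L) (a b : L), F (fun l => if l < j then x l else if l = j then a + b else x l)
    = F (fun l => if l < j then x l else if l = j then a else x l)
      + F (fun l => if l < j then x l else if l = j then b else x l)

theorem ar_ex {n : ℕ} (f : C K L n) : Ar n (ex f) := by
  intro x y h
  unfold ex
  congr 1
  funext i
  exact h _ i.2

theorem ad_ex {n : ℕ} (f : C K L n) {j : ℕ} (hj : j < n) : Ad j (ex f) := by
  intro x a b
  have key : ∀ c, ex f (fun l => if l < j then x l else if l = j then c else x l)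
      = f (Function.update (fun l : Fin n => x l.1) ⟨j, hj⟩ c) := by
    intro c
    unfold ex
    congr 1
    funext l
    by_cases h : l = ⟨j, hj⟩
    · subst h; simp
    · have : l.1 ≠ j := fun h' => h (Fin.ext h')
      simp [h, this]
  rw [key, key, key, MultilinearMap.map_update_add]

theorem pc_add_right {p j : ℕ} {F : (ℕ → L) → L} (hF : Ad j F) (G G' : (ℕ → L) → L) :
    pc p j F (G + G') = pc p j F G + pc p j F G' := by
  funext x
  have := hF (fun l => if l < j then x l else x (l + p - 1)) (G (fun k => x (j + k)))
    (G' (fun k => x (j + k)))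
  simp only [pc, Pi.add_apply, ← smul_add]
  congr 1
  convert this using 2
  · funext l; split_ifs <;> rfl
  · congr 1; funext l; split_ifs <;> rfl
  · congr 1; funext l; split_ifs <;> rfl

/-- Right composition as a homomorphism. -/
def pcR (p j : ℕ) (F : (ℕ → L) → L) (hF : Ad j F) : ((ℕ → L) → L) →+ ((ℕ → L) → L) :=
  AddMonoidHom.mk' (pc p j F) (pc_add_right hF)

/-- Left composition as a homomorphism. -/
def pcL (p j : ℕ) (G : (ℕ → L) → L) : ((ℕ → L) → L) →+ ((ℕ → L) → L) :=
  AddMonoidHom.mk' (fun F => pc p j F G) (by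
    intro a b; funext x; simp [pc])

theorem pcL_sum {ι : Type*} (p j : ℕ) (G : (ℕ → L) → L) (s : Finset ι) (F : ι → (ℕ → L) → L) :
    pc p j (∑ i ∈ s, F i) G = ∑ i ∈ s, pc p j (F i) G := map_sum (pcL p j G) F s

theorem pcL_smul (p j : ℕ) (G F : (ℕ → L) → L) (e : ℤ) :
    pc p j (e • F) G = e • pc p j F G := map_zsmul (pcL p j G) e F

theorem pcL_delta (p j : ℕ) (G A B : (ℕ → L) → L) (e : ℤ) :
    pc p j (-(A - e • B)) G = -pc p j A G + e • pc p j B G := by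
  have := map_neg (pcL p j G) (A - e • B)
  rw [map_sub, map_zsmul] at this
  exact this.trans (by simp only [pcL, AddMonoidHom.mk'_apply]; abel)

theorem pcR_sum {ι : Type*} {p j : ℕ} {F : (ℕ → L) → L} (hF : Ad j F) (s : Finset ι)
    (G : ι → (ℕ → L) → L) :
    pc p j F (∑ i ∈ s, G i) = ∑ i ∈ s, pc p j F (G i) := map_sum (pcR p j F hF) G s

theorem pcR_smul {p j : ℕ} {F : (ℕ → L) → L} (hF : Ad j F) (G : (ℕ → L) → L) (e : ℤ) :
    pc p j F (e • G) = e • pc p j F G := map_zsmul (pcR p j F hF) e G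

theorem pcR_zero {p j : ℕ} {F : (ℕ → L) → L} (hF : Ad j F) :
    pc p j F 0 = 0 := map_zero (pcR p j F hF)

theorem pcR_delta {p j : ℕ} {F : (ℕ → L) → L} (hF : Ad j F) (A B : (ℕ → L) → L) (e : ℤ) :
    pc p j F (-(A - e • B)) = -pc p j F A + e • pc p j F B := by
  have := map_neg (pcR p j F hF) (A - e • B)
  rw [map_sub, map_zsmul] at this
  exact this.trans (by simp only [pcR, AddMonoidHom.mk'_apply]; abel)

theorem par {n p i j t : ℕ} (F : (ℕ → L) → L) {f : (ℕ → L) → L} (g : (ℕ → L) → L)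
    (hf : Ar n f) (hij : i < j) (ht : t + 1 = j + n) :
    pc p t (pc n i F f) g
      = sgn (((n : ℤ) - 1) * ((p : ℤ) - 1)) • pc n i (pc p j F g) f := by
  funext x
  simp only [pc, Pi.smul_apply, smul_smul]
  have e1 : (t : ℤ) = j + ((n : ℤ) - 1) := by omega
  congr 1
  · rw [e1, add_mul, sgn_add]; ring
  · congr 1
    funext l
    rcases lt_trichotomy l i with h | h | h
    · have : l < j := by omega
      have : l < t := by omega
      simp [*]
    · subst h
      simp only [lt_irrefl, if_true, if_false, hij]
      apply hf
      intro k hk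
      have : l + k < t := by omega
      simp [this]
    · have h1 : ¬ l < i := by omega
      have h2 : l ≠ i := by omega
      simp only [h1, h2, if_false]
      rcases lt_trichotomy l j with h' | h' | h'
      · have : l + n - 1 < t := by omega
        simp [*]
      · subst h'
        have h3 : l + n - 1 = t := by omega
        simp only [h3, lt_irrefl, if_true, if_false]
        congr 1
        funext k
        have h4 : ¬ l + k < i := by omega
        have h5 : l + k ≠ i := by omega
        have h6 : l + k + n - 1 = t + k := by omega
        simp [h4, h5, h6]
      · have h3 : ¬ l + n - 1 < t := by omega
        have h4 : l + n - 1 ≠ t := by omega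
        have h5 : ¬ l < j := by omega
        have h6 : l ≠ j := by omega
        have h7 : ¬ l + p - 1 < i := by omega
        have h8 : l + p - 1 ≠ i := by omega
        have h9 : l + n - 1 + p - 1 = l + p - 1 + n - 1 := by omega
        simp [*]

theorem par' {n p i j t : ℕ} (F : (ℕ → L) → L) {f : (ℕ → L) → L} (g : (ℕ → L) → L)
    (hf : Ar n f) (hij : i < j) (ht : t + 1 = j + n) :
    pc n i (pc p j F g) f
      = sgn (((n : ℤ) - 1) * ((p : ℤ) - 1)) • pc p t (pc n i F f) g := by
  rw [par F g hf hij ht, smul_smul, sgn_sq, one_smul]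

theorem seq {n p i k t q : ℕ} {F : (ℕ → L) → L} (f g : (ℕ → L) → L)
    (hF : Ad i F) (hk : k < n) (ht : t = i + k) (hq : q + 1 = n + p) :
    pc p t (pc n i F f) g = pc q i F (pc p k f g) := by
  have : pc p k f g = sgn ((k : ℤ) * ((p : ℤ) - 1)) • fun x => 
    f fun j => if j < k then x j else if j = k then g (fun l => x (k + l)) else x (j + p - 1) := rfl
  rw [this, pcR_smul hF]
  funext x
  simp only [pc, Pi.smul_apply, smul_smul]
  subst ht
  congr 1
  · have e1 : (q : ℤ) = n + p - 1 := by omega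
    rw [e1, ← sgn_add, ← sgn_add]; congr 1; push_cast; ring
  · congr 1
    funext l
    rcases lt_trichotomy l i with h | h | h
    · have : l < i + k := by omega
      simp [*]
    · subst h
      simp only [lt_irrefl, if_true, if_false]
      congr 1
      funext r
      rcases lt_trichotomy r k with h' | h' | h'
      · simp [h']
      · subst h'; simp [add_assoc]
      · have h1 : ¬ l + r < l + k := by omega
        have h2 : l + r ≠ l + k := by omega
        have h3 : ¬ r < k := by omega
        have h4 : r ≠ k := by omega
        have h5 : l + r + p - 1 = l + (r + p - 1) := by omega
        simp only [h1, h2, h3, h4, h5, if_false]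
    · have h1 : ¬ l < i := by omega
      have h2 : l ≠ i := by omega
      have h3 : ¬ l + n - 1 < i + k := by omega
      have h4 : l + n - 1 ≠ i + k := by omega
      have h5 : l + n - 1 + p - 1 = l + q - 1 := by omega
      simp only [h1, h2, h3, h4, h5, if_false]

theorem ad_pc {n i j t : ℕ} {F f : (ℕ → L) → L} (hF : Ad j F) (hf : Ar n f) (hij : i < j)
    (ht : t + 1 = j + n) : Ad t (pc n i F f) := by
  intro x a b
  have h0 : ∀ c, pc 1 t (pc n i F f) (fun _ => c) x
      = pc n i F f (fun l => if l < t then x l else if l = t then c else x l) := by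
    intro c; simp [pc, sgn]
  rw [← h0, ← h0, ← h0, par F _ hf hij ht, par F _ hf hij ht, par F _ hf hij ht]
  have : (fun _ : ℕ → L => a + b) = (fun _ => a) + (fun _ => b) := rfl
  rw [this, pc_add_right hF]
  simp [pc]

/-- summation of three-index arrays -/
theorem sum2 {V : Type*} [AddCommGroup V] (m : ℕ) (Ψ : ℕ → ℕ → V) :
    ∑ i ∈ range (m+1), ∑ k ∈ range (m+1), Ψ i k =
      ∑ i ∈ range m, ∑ k ∈ range i, Ψ (i+1) k + ∑ i ∈ range m, Ψ (i+1) i + Ψ m m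
      + ∑ i ∈ range m, Ψ i i + ∑ k ∈ range m, ∑ i ∈ range k, Ψ i k + ∑ i ∈ range m, Ψ i m := by
  induction m with
  | zero => simp
  | succ m ih =>
    have : ∑ i ∈ range (m+1+1), ∑ k ∈ range (m+1+1), Ψ i k
      = ∑ i ∈ range (m+1), ∑ k ∈ range (m+1), Ψ i k + ∑ i ∈ range (m+1), Ψ i (m+1)
        + (∑ k ∈ range m, Ψ (m+1) k + Ψ (m+1) m) + Ψ (m+1) (m+1) := by
      rw [sum_range_succ]
      simp only [sum_range_succ _ (m+1), sum_add_distrib]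
      rw [sum_range_succ (Ψ (m+1)) m]
      abel
    rw [this, ih]
    simp only [sum_range_succ _ m]
    abel

theorem sum3 {V : Type*} [AddCommGroup V] (m : ℕ) (Φ : ℕ → ℕ → ℕ → V) :
    ∑ j ∈ range (m+1), ∑ i ∈ range j, ∑ k ∈ range m, Φ i j k =
      ∑ j ∈ range m, ∑ i ∈ range j, ∑ k ∈ range i, Φ (i+1) (j+1) k
      + ∑ j ∈ range m, ∑ i ∈ range j, Φ (i+1) (j+1) i
      + ∑ i ∈ range m, Φ i (i+1) i
      + ∑ j ∈ range m, ∑ i ∈ range j, Φ i (j+1) i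
      + ∑ j ∈ range m, ∑ k ∈ range j, ∑ i ∈ range k, Φ i (j+1) k
      + ∑ j ∈ range m, ∑ i ∈ range j, Φ i (j+1) j
      + ∑ j ∈ range m, ∑ i ∈ range j, Φ i j j
      + ∑ k ∈ range m, ∑ j ∈ range k, ∑ i ∈ range j, Φ i j k := by
  induction m with
  | zero => simp
  | succ m ih =>
    have : ∑ j ∈ range (m+1+1), ∑ i ∈ range j, ∑ k ∈ range (m+1), Φ i j k
      = ∑ j ∈ range (m+1), ∑ i ∈ range j, ∑ k ∈ range m, Φ i j k
       + (∑ j ∈ range m, ∑ i ∈ range j, Φ i j m + ∑ i ∈ range m, Φ i m m)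
       + ∑ i ∈ range (m+1), ∑ k ∈ range (m+1), Φ i (m+1) k := by
      rw [sum_range_succ, ← sum_range_succ (fun j => ∑ i ∈ range j, Φ i j m) m,
        ← sum_add_distrib (s := range (m+1)) (f := fun j => ∑ i ∈ range j, ∑ k ∈ range m, Φ i j k)]
      congr 1
      apply sum_congr rfl; intro j _
      rw [← sum_add_distrib]
      apply sum_congr rfl; intro i _
      rw [sum_range_succ]
    rw [this, ih, sum2]
    simp only [sum_range_succ _ m]
    abel

theorem sum_tri {V : Type*} [AddCommGroup V] (m : ℕ) (ψ : ℕ → ℕ → V) :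
    ∑ j ∈ range m, ∑ k ∈ range (m - 1 - j), ψ j (j+1+k) = ∑ k ∈ range m, ∑ j ∈ range k, ψ j k := by
  rw [sum_sigma', sum_sigma']
  refine sum_bij' (fun a _ => ⟨a.1+1+a.2, a.1⟩) (fun a _ => ⟨a.2, a.1 - 1 - a.2⟩) ?_ ?_ ?_ ?_ ?_
  · rintro ⟨a, b⟩ h; simp at h ⊢; omega
  · rintro ⟨a, b⟩ h; simp at h ⊢; omega
  · rintro ⟨a, b⟩ h; simp at h ⊢
  · rintro ⟨a, b⟩ h; simp at h ⊢; omega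
  · rintro ⟨a, b⟩ h; rfl

theorem br2_eq (m n p : ℕ) (h f g : (ℕ → L) → L) :
    br2 m n p h f g = ∑ j ∈ range m, ∑ i ∈ range j, pc p (j+n-1) (pc n i h f) g := by
  funext x
  simp only [br2, Finset.sum_apply]
  rw [sum_sigma', sum_sigma']
  refine sum_bij' (fun a _ => ⟨a.2+1-n, a.1⟩) (fun a _ => ⟨a.2, a.1 + n - 1⟩) ?_ ?_ ?_ ?_ ?_
  · rintro ⟨a, b⟩ h; simp at h ⊢; omega
  · rintro ⟨a, b⟩ h; simp at h ⊢; omega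
  · rintro ⟨a, b⟩ h; simp at h ⊢; omega
  · rintro ⟨a, b⟩ h; simp at h ⊢; omega
  · rintro ⟨a, b⟩ h
    simp at h ⊢
    have : b + 1 - n + n - 1 = b := by omega
    rw [this]

theorem tc_eq (m n : ℕ) (f g : (ℕ → L) → L) :
    tc m n f g = ∑ i ∈ range m, pc n i f g := by
  funext x; simp [tc]

theorem delta_eq (μ : C K L 2) (m : ℕ) (f : (ℕ → L) → L) :
    delta μ m f = -(tc m 2 f (ex μ) - sgn ((m : ℤ) - 1) • tc 2 m (ex μ) f) := by
  funext x; simp [delta, gb]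

theorem cup_eq (μ : C K L 2) (m n : ℕ) (f g : (ℕ → L) → L) :
    cup μ m n f g = sgn (m : ℤ) • pc n m (pc m 0 (ex μ) f) g := rfl

theorem parl {p i j t : ℕ} (F : (ℕ → L) → L) {u : (ℕ → L) → L} (g : (ℕ → L) → L)
    (hu : Ar 2 u) (hij : i < j) (ht : t = j + 1) :
    pc 2 i (pc p j F g) u = sgn ((p : ℤ) - 1) • pc p t (pc 2 i F u) g := by
  rw [par' F g hu hij (t := t) (by omega)]; norm_num

theorem parr {n i j t : ℕ} (F : (ℕ → L) → L) {f : (ℕ → L) → L} (u : (ℕ → L) → L)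
    (hf : Ar n f) (hij : i < j) (ht : t + 1 = j + n) :
    pc 2 t (pc n i F f) u = sgn ((n : ℤ) - 1) • pc n i (pc 2 j F u) f := by
  rw [par F u hf hij ht]; norm_num

/-- The three-fold composite. -/
def Phi (n p : ℕ) (h f g u : (ℕ → L) → L) (i j k : ℕ) : (ℕ → L) → L :=
  pc p (j+n-1) (pc n i (pc 2 k h u) f) g

theorem e1_term {m n p i j : ℕ} {h f g u : (ℕ → L) → L} (hh : ∀ l < m, Ad l h)
    (hf : Ar n f) (hg : Ar p g) (hu : Ar 2 u) (hij : i < j) (hjm : j < m) :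
    ∑ k ∈ range (m + n + p - 2), pc 2 k (pc p (j+n-1) (pc n i h f) g) u
      = (sgn ((p : ℤ) - 1) * sgn ((n : ℤ) - 1)) • ∑ k ∈ range i, Phi n p h f g u (i+1) (j+1) k
      + sgn ((p : ℤ) - 1) • ∑ k ∈ range n, pc p (j+(n+1)-1) (pc (n+1) i h (pc 2 k f u)) g
      + (sgn ((p : ℤ) - 1) * sgn ((n : ℤ) - 1)) •
          ∑ k ∈ range (j-1-i), Phi n p h f g u i (j+1) (i+1+k)
      + ∑ k ∈ range p, pc (p+1) (j+n-1) (pc n i h f) (pc 2 k g u)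
      + (sgn ((p : ℤ) - 1) * sgn ((n : ℤ) - 1)) •
          ∑ k ∈ range (m-1-j), Phi n p h f g u i j (j+1+k) := by
  have hM : m + n + p - 2 = i + n + (j-1-i) + p + (m-1-j) := by omega
  rw [hM, sum_range_add, sum_range_add, sum_range_add, sum_range_add]
  simp only [smul_sum]
  congr 1
  · congr 1
    · congr 1
      · congr 1
        · apply sum_congr rfl
          intro k hk
          rw [mem_range] at hk
          rw [parl _ g hu (by omega) rfl, parl _ f hu hk rfl, pcL_smul, smul_smul, Phi]
          congr 2; omega
        · apply sum_congr rfl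
          intro k hk
          rw [mem_range] at hk
          rw [parl _ g hu (by omega) (t := j+(n+1)-1) (by omega),
            seq (q := n+1) f u (hh i (by omega)) hk rfl (by omega)]
      · apply sum_congr rfl
        intro k hk
        rw [mem_range] at hk
        rw [parl _ g hu (by omega) (t := j+1+n-1) (by omega),
          parr h u hf (j := i+1+k) (by omega) (by omega), pcL_smul, smul_smul, Phi]
    · apply sum_congr rfl
      intro k hk
      rw [mem_range] at hk
      rw [seq (q := p+1) (k := k) g u (ad_pc (hh j hjm) hf hij (by omega)) hk (by omega) (by omega)]
  · apply sum_congr rfl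
    intro k hk
    rw [mem_range] at hk
    rw [parr _ u hg (j := j+1+k+n-1) (by omega) (by omega),
      parr h u hf (j := j+1+k) (by omega) (by omega), pcL_smul, smul_smul, Phi]

theorem e1 {m n p : ℕ} {h f g u : (ℕ → L) → L} (hh : ∀ l < m, Ad l h)
    (hf : Ar n f) (hg : Ar p g) (hu : Ar 2 u) :
    tc (m+n+p-2) 2 (br2 m n p h f g) u
      = (sgn ((p : ℤ) - 1) * sgn ((n : ℤ) - 1)) •
        (∑ j ∈ range m, ∑ i ∈ range j, ∑ k ∈ range i, Phi n p h f g u (i+1) (j+1) k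
         + ∑ j ∈ range m, ∑ k ∈ range j, ∑ i ∈ range k, Phi n p h f g u i (j+1) k
         + ∑ k ∈ range m, ∑ j ∈ range k, ∑ i ∈ range j, Phi n p h f g u i j k)
      + sgn ((p : ℤ) - 1) • br2 m (n+1) p h (tc n 2 f u) g
      + br2 m n (p+1) h f (tc p 2 g u) := by
  have h1 : tc (m+n+p-2) 2 (br2 m n p h f g) u
      = ∑ j ∈ range m, ∑ i ∈ range j,
        ∑ k ∈ range (m + n + p - 2), pc 2 k (pc p (j+n-1) (pc n i h f) g) u := by
    rw [tc_eq, br2_eq]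
    simp only [pcL_sum]
    rw [sum_comm]
    apply sum_congr rfl; intro j _
    rw [sum_comm]
  have h2 : br2 m (n+1) p h (tc n 2 f u) g = ∑ j ∈ range m, ∑ i ∈ range j,
      ∑ k ∈ range n, pc p (j+(n+1)-1) (pc (n+1) i h (pc 2 k f u)) g := by
    rw [br2_eq, tc_eq]
    apply sum_congr rfl; intro j hj
    apply sum_congr rfl; intro i hi
    rw [mem_range] at hi hj
    rw [pcR_sum (hh i (by omega)), pcL_sum]
  have h3 : br2 m n (p+1) h f (tc p 2 g u) = ∑ j ∈ range m, ∑ i ∈ range j,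
      ∑ k ∈ range p, pc (p+1) (j+n-1) (pc n i h f) (pc 2 k g u) := by
    rw [br2_eq, tc_eq]
    apply sum_congr rfl; intro j hj
    apply sum_congr rfl; intro i hi
    rw [mem_range] at hi hj
    rw [pcR_sum (ad_pc (hh j hj) hf hi (by omega))]
  have h4 : ∀ j, ∑ k ∈ range j, ∑ i ∈ range k, Phi n p h f g u i (j+1) k
      = ∑ i ∈ range j, ∑ k ∈ range (j-1-i), Phi n p h f g u i (j+1) (i+1+k) := by
    intro j
    rw [← sum_tri j (fun i k => Phi n p h f g u i (j+1) k)]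
  have h5 : ∑ k ∈ range m, ∑ j ∈ range k, ∑ i ∈ range j, Phi n p h f g u i j k
      = ∑ j ∈ range m, ∑ i ∈ range j, ∑ k ∈ range (m-1-j), Phi n p h f g u i j (j+1+k) := by
    rw [← sum_tri m (fun j k => ∑ i ∈ range j, Phi n p h f g u i j k)]
    apply sum_congr rfl; intro j _
    rw [sum_comm]
  rw [h1, h2, h3, h5, sum_congr rfl (fun j _ => h4 j)]
  have h6 : ∑ j ∈ range m, ∑ i ∈ range j,
        ∑ k ∈ range (m + n + p - 2), pc 2 k (pc p (j+n-1) (pc n i h f) g) u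
      = ∑ j ∈ range m, ∑ i ∈ range j, (
      (sgn ((p : ℤ) - 1) * sgn ((n : ℤ) - 1)) • ∑ k ∈ range i, Phi n p h f g u (i+1) (j+1) k
      + sgn ((p : ℤ) - 1) • ∑ k ∈ range n, pc p (j+(n+1)-1) (pc (n+1) i h (pc 2 k f u)) g
      + (sgn ((p : ℤ) - 1) * sgn ((n : ℤ) - 1)) •
          ∑ k ∈ range (j-1-i), Phi n p h f g u i (j+1) (i+1+k)
      + ∑ k ∈ range p, pc (p+1) (j+n-1) (pc n i h f) (pc 2 k g u)
      + (sgn ((p : ℤ) - 1) * sgn ((n : ℤ) - 1)) •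
          ∑ k ∈ range (m-1-j), Phi n p h f g u i j (j+1+k)) := by
    apply sum_congr rfl; intro j hj
    apply sum_congr rfl; intro i hi
    exact e1_term hh hf hg hu (mem_range.1 hi) (mem_range.1 hj)
  rw [h6]
  simp only [sum_add_distrib, ← smul_sum, smul_add]
  generalize (sgn ((p : ℤ) - 1) * sgn ((n : ℤ) - 1)) = e
  generalize sgn ((p : ℤ) - 1) = e'
  abel

theorem e2 {m n p : ℕ} (h f g u : (ℕ → L) → L) :
    br2 (m+1) n p (tc m 2 h u) f g
      = ∑ j ∈ range (m+1), ∑ i ∈ range j, ∑ k ∈ range m, Phi n p h f g u i j k := by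
  rw [br2_eq, tc_eq]
  simp only [pcL_sum, Phi]

theorem e3 {m n p : ℕ} {h u : (ℕ → L) → L} (f g : (ℕ → L) → L) (hh : ∀ l < m, Ad l h) :
    br2 m (n+1) p h (tc 2 n u f) g
      = ∑ j ∈ range m, ∑ i ∈ range j, Phi n p h f g u (i+1) (j+1) i
       + ∑ j ∈ range m, ∑ i ∈ range j, Phi n p h f g u i (j+1) i := by
  rw [br2_eq, tc_eq]
  simp only [← sum_add_distrib]
  apply sum_congr rfl; intro j hj
  apply sum_congr rfl; intro i hi
  rw [mem_range] at hi hj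
  rw [pcR_sum (hh i (by omega)), pcL_sum, sum_range_succ, sum_range_one, Phi, Phi,
    seq (k := 1) (q := n+1) u f (hh i (by omega)) (by omega) rfl (by omega),
    seq (k := 0) (q := n+1) (t := i) u f (hh i (by omega)) (by omega) rfl (by omega), add_comm]
  congr 2 <;> omega

theorem e4 {m n p : ℕ} {h f u : (ℕ → L) → L} (g : (ℕ → L) → L) (hh : ∀ l < m, Ad l h)
    (hf : Ar n f) :
    br2 m n (p+1) h f (tc 2 p u g)
      = sgn ((n : ℤ) - 1) • (∑ j ∈ range m, ∑ i ∈ range j, Phi n p h f g u i (j+1) j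
       + ∑ j ∈ range m, ∑ i ∈ range j, Phi n p h f g u i j j) := by
  rw [br2_eq, tc_eq]
  simp only [← sum_add_distrib, smul_sum]
  apply sum_congr rfl; intro j hj
  apply sum_congr rfl; intro i hi
  rw [mem_range] at hi hj
  have ad : Ad (j+n-1) (pc n i h f) := ad_pc (hh j hj) hf hi (by omega)
  rw [pcR_sum ad, sum_range_succ, sum_range_one,
    ← seq (n := 2) (k := 1) (t := j+1+n-1) u g ad (by omega) (by omega) (by omega),
    ← seq (n := 2) (k := 0) (t := j+n-1) u g ad (by omega) (by omega) (by omega),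
    parr h u hf hi (by omega), pcL_smul, pcL_smul, ← smul_add, Phi, Phi, add_comm]

theorem e5 {m n p : ℕ} {h : (ℕ → L) → L} (μ : C K L 2) (f g : (ℕ → L) → L)
    (hh : ∀ l < m, Ad l h) :
    ∑ i ∈ range m, Phi n p h f g (ex μ) i (i+1) i
      = sgn (n : ℤ) • tc m (n+p) h (cup μ n p f g) := by
  rw [tc_eq, cup_eq, smul_sum]
  apply sum_congr rfl; intro i hi
  rw [mem_range] at hi
  rw [pcR_smul (hh i hi), smul_smul, sgn_sq, one_smul, Phi,
    seq (k := 0) (q := n+1) (t := i) (ex μ) f (hh i hi) (by omega) rfl (by omega),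
    seq (k := n) (q := n+p) _ g (hh i hi) (by omega) (by omega) (by omega)]

theorem e6 {m n p : ℕ} (hm : 1 ≤ m) {h f : (ℕ → L) → L} (μ : C K L 2) (g : (ℕ → L) → L)
    (hf : Ar n f) :
    br2 (m+1) n p (tc 2 m (ex μ) h) f g
      = tc 2 (m+n+p-2) (ex μ) (br2 m n p h f g)
      + sgn ((m : ℤ) + n - 1) • cup μ (m+n-1) p (tc m n h f) g
      + (sgn (((m : ℤ) - 1) * ((n : ℤ) - 1)) * sgn (n : ℤ)) • cup μ n (m+p-1) f (tc m p h g) := by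
  have a0 : Ad 0 (ex μ) := ad_ex μ (by omega)
  have a1 : Ad 1 (ex μ) := ad_ex μ (by omega)
  have h1 : ∑ j ∈ range (m+1), ∑ i ∈ range j, pc p (j+n-1) (pc n i (pc m 0 (ex μ) h) f) g
      = pc (m+n+p-2) 0 (ex μ) (br2 m n p h f g)
      + sgn ((m : ℤ) + n - 1) • cup μ (m+n-1) p (tc m n h f) g := by
    rw [sum_range_succ]
    congr 1
    · rw [br2_eq]
      simp only [pcR_sum a0]
      apply sum_congr rfl; intro j hj
      apply sum_congr rfl; intro i hi
      rw [mem_range] at hi hj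
      rw [seq (k := i) (q := m+n-1) h f a0 (by omega) (by omega) (by omega),
        seq (k := j+n-1) (q := m+n+p-2) _ g a0 (by omega) (by omega) (by omega)]
    · have : ((m + n - 1 : ℕ) : ℤ) = (m : ℤ) + n - 1 := by omega
      rw [cup_eq, this, smul_smul, sgn_sq, one_smul, tc_eq, pcR_sum a0, pcL_sum]
      apply sum_congr rfl; intro i hi
      rw [mem_range] at hi
      rw [seq (k := i) (q := m+n-1) h f a0 (by omega) (by omega) (by omega)]
  have h2 : ∑ j ∈ range (m+1), ∑ i ∈ range j, pc p (j+n-1) (pc n i (pc m 1 (ex μ) h) f) g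
      = pc (m+n+p-2) 1 (ex μ) (br2 m n p h f g)
      + (sgn (((m : ℤ) - 1) * ((n : ℤ) - 1)) * sgn (n : ℤ)) •
        cup μ n (m+p-1) f (tc m p h g) := by
    rw [sum_range_succ']
    simp only [sum_range_succ', sum_add_distrib, range_zero, sum_empty, add_zero]
    congr 1
    · rw [br2_eq]
      simp only [pcR_sum a1]
      apply sum_congr rfl; intro j hj
      apply sum_congr rfl; intro i hi
      rw [mem_range] at hi hj
      rw [seq (k := i) (q := m+n-1) h f a1 (by omega) (by omega) (by omega),
        seq (k := j+n-1) (q := m+n+p-2) _ g a1 (by omega) (by omega) (by omega)]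
    · have ad : Ad n (pc n 0 (ex μ) f) := ad_pc a1 hf (by omega) (by omega)
      rw [cup_eq, smul_smul, mul_assoc, sgn_sq, mul_one, tc_eq, pcR_sum ad, smul_sum]
      apply sum_congr rfl; intro j hj
      rw [mem_range] at hj
      rw [par' (ex μ) h hf (t := n) (by omega) (by omega), pcL_smul,
        seq (k := j) (q := m+p-1) h g ad (by omega) (by omega) (by omega),
        mul_comm ((n : ℤ) - 1)]
  have tc_two : ∀ (q : ℕ) (A B : (ℕ → L) → L), tc 2 q A B = pc q 0 A B + pc q 1 A B := by
    intro q A B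
    rw [tc_eq, sum_range_succ, sum_range_one]
  rw [br2_eq, tc_two, tc_two]
  have add_l : ∀ (q t : ℕ) (A B G : (ℕ → L) → L), pc q t (A + B) G = pc q t A G + pc q t B G :=
    fun q t A B G => map_add (pcL q t G) A B
  simp only [add_l, sum_add_distrib]
  rw [h1, h2]
  abel

theorem br2_d1 (m n p : ℕ) (A B f g : (ℕ → L) → L) (e : ℤ) :
    br2 m n p (-(A - e • B)) f g = -br2 m n p A f g + e • br2 m n p B f g := by
  rw [br2_eq, br2_eq, br2_eq]
  simp only [smul_sum, ← sum_neg_distrib, ← sum_add_distrib]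
  apply sum_congr rfl; intro j hj
  apply sum_congr rfl; intro i hi
  have := pcL_delta p (j+n-1) g (pc n i A f) (pc n i B f) e
  rw [← this, pcL_delta]; congr 1; abel

theorem br2_d2 {m n p : ℕ} {h : (ℕ → L) → L} (hh : ∀ l < m, Ad l h) (A B g : (ℕ → L) → L)
    (e : ℤ) :
    br2 m n p h (-(A - e • B)) g = -br2 m n p h A g + e • br2 m n p h B g := by
  simp only [br2_eq, smul_sum, ← sum_neg_distrib, ← sum_add_distrib]
  apply sum_congr rfl; intro j hj
  apply sum_congr rfl; intro i hi
  rw [mem_range] at hi hj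
  rw [pcR_delta (hh i (by omega))]
  have := pcL_delta p (j+n-1) g (pc n i h A) (pc n i h B) e
  rw [← this]; congr 1; abel

theorem br2_d3 {m n p : ℕ} {h f : (ℕ → L) → L} (hh : ∀ l < m, Ad l h) (hf : Ar n f)
    (A B : (ℕ → L) → L) (e : ℤ) :
    br2 m n p h f (-(A - e • B)) = -br2 m n p h f A + e • br2 m n p h f B := by
  simp only [br2_eq, smul_sum, ← sum_neg_distrib, ← sum_add_distrib]
  apply sum_congr rfl; intro j hj
  apply sum_congr rfl; intro i hi
  rw [mem_range] at hi hj
  rw [pcR_delta (ad_pc (hh j hj) hf hi (by omega))]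

theorem sgn_or (e : ℤ) : sgn e = 1 ∨ sgn e = -1 := by
  rw [sgn_eq]; split_ifs <;> simp

theorem final_alg {V : Type*} [AddCommGroup V] (s r t d b w : ℤ) (hs : s = 1 ∨ s = -1)
    (hr : r = 1 ∨ r = -1) (ht : t = 1 ∨ t = -1)
    (P D24 D3 D67 Bf Bg H Q1 Q2 Z : V) (X1 X2 X3 X4 X6 : V)
    (x1 : X1 = (s * r) • P + s • Bf + Bg)
    (x2 : X2 = P + D24 + D3 + D67) (x5 : D3 = b • Z)
    (x3 : X3 = D24) (x4 : X4 = r • D67) (x6 : X6 = H + d • Q1 + w • Q2)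
    (hb : b = - r) (hd : d = -(t * r)) (e : ℤ) (hw : e = -(t * r * w)) :
    -X1 + (t * r * s) • H - (-Bg + s • X4) - s • (-Bf + r • X3) - (s * r) • (-X2 + t • X6)
      = s • (Q1 + e • Q2 - Z) := by
  subst x5 hb hd hw x1 x2 x3 x4 x6
  rcases hs with rfl | rfl <;> rcases hr with rfl | rfl <;> rcases ht with rfl | rfl <;> module

theorem sign_facts (a b : ℤ) : sgn b = -sgn (b - 1) ∧ sgn (a + b - 1) = -(sgn (a - 1) * sgn (b - 1))
    ∧ sgn ((a - 1) * b)
      = -(sgn (a - 1) * sgn (b - 1) * (sgn ((a - 1) * (b - 1)) * sgn b)) := by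
  by_cases ha : Even a <;> by_cases hb : Even b <;>
    simp only [sgn_eq, Int.even_sub, Int.even_add, Int.even_mul, ha, hb, Int.not_even_one] <;> simp

theorem main_pos (μ : C K L 2) {m n p : ℕ} (hm : 1 ≤ m) (h : C K L m) (f : C K L n) (g : C K L p) :
    delta μ (m + n + p - 2) (br2 m n p (ex h) (ex f) (ex g))
        - br2 m n (p + 1) (ex h) (ex f) (delta μ p (ex g))
        - sgn ((p : ℤ) - 1) • br2 m (n + 1) p (ex h) (delta μ n (ex f)) (ex g)
        - sgn (((p : ℤ) - 1) + ((n : ℤ) - 1)) •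
            br2 (m + 1) n p (delta μ m (ex h)) (ex f) (ex g)
      = sgn ((p : ℤ) - 1) •
          (cup μ (m + n - 1) p (tc m n (ex h) (ex f)) (ex g)
            + sgn (((m : ℤ) - 1) * (n : ℤ)) •
                cup μ n (m + p - 1) (ex f) (tc m p (ex h) (ex g))
            - tc m (n + p) (ex h) (cup μ n p (ex f) (ex g))) := by
  have hh : ∀ l < m, Ad l (ex h) := fun l hl => ad_ex h hl
  have hf := ar_ex f
  have hg := ar_ex g
  have hu := ar_ex μ
  have hdel : delta μ (m + n + p - 2) (br2 m n p (ex h) (ex f) (ex g))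
      = -tc (m+n+p-2) 2 (br2 m n p (ex h) (ex f) (ex g)) (ex μ)
        + (sgn ((m : ℤ) - 1) * sgn ((n : ℤ) - 1) * sgn ((p : ℤ) - 1)) •
          tc 2 (m+n+p-2) (ex μ) (br2 m n p (ex h) (ex f) (ex g)) := by
    rw [delta_eq]
    rcases eq_or_lt_of_le hm with h1 | h1
    · have : br2 m n p (ex h) (ex f) (ex g) = 0 := by
        subst h1; simp [br2_eq]
      have h0 : tc 2 (m+n+p-2) (ex μ) (0 : (ℕ → L) → L) = 0 := by
        rw [tc_eq]
        apply sum_eq_zero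
        intro i hi
        exact pcR_zero (ad_ex μ (mem_range.1 hi))
      rw [this, h0]; simp
    · have : ((m + n + p - 2 : ℕ) : ℤ) - 1 = ((m : ℤ) - 1) + ((n : ℤ) - 1) + ((p : ℤ) - 1) := by
        omega
      rw [this, sgn_add, sgn_add]
      abel
  rw [hdel, delta_eq μ p, delta_eq μ n, delta_eq μ m, br2_d1, br2_d2 hh, br2_d3 hh hf, sgn_add]
  have x2 := e2 (m := m) (n := n) (p := p) (ex h) (ex f) (ex g) (ex μ)
  rw [sum3] at x2
  refine final_alg _ _ _ _ _ _ (sgn_or _) (sgn_or _) (sgn_or _) _ _ _ _ _ _ _ _ _ _ _ _ _ _ _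
    (e1 hh hf hg hu) (x2.trans ?_) (e5 μ (ex f) (ex g) hh) (e3 (ex f) (ex g) hh)
    (e4 (ex g) hh hf) (e6 hm μ (ex g) hf) ?_ ?_ _ ?_
  · abel
  · exact (sign_facts m n).1
  · exact (sign_facts m n).2.1
  · exact (sign_facts m n).2.2

end helpers

/-- the second-order operadic Stokes law
`δ̄⟨h|fg⟩ = (-1)^{|g|} (⟨h|f⟩ ⌣ g + (-1)^{|h| deg f} f ⌣ ⟨h|g⟩ − ⟨h|f ⌣ g⟩)`. -/
theorem second_order_operadic_stokes_law
    (μ : C K L 2) {m n p : ℕ} (h : C K L m) (f : C K L n) (g : C K L p) :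
    delta μ (m + n + p - 2) (br2 m n p (ex h) (ex f) (ex g))
        - br2 m n (p + 1) (ex h) (ex f) (delta μ p (ex g))
        - sgn ((p : ℤ) - 1) • br2 m (n + 1) p (ex h) (delta μ n (ex f)) (ex g)
        - sgn (((p : ℤ) - 1) + ((n : ℤ) - 1)) •
            br2 (m + 1) n p (delta μ m (ex h)) (ex f) (ex g)
      = sgn ((p : ℤ) - 1) •
          (cup μ (m + n - 1) p (tc m n (ex h) (ex f)) (ex g)
            + sgn (((m : ℤ) - 1) * (n : ℤ)) •
                cup μ n (m + p - 1) (ex f) (tc m p (ex h) (ex g))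
            - tc m (n + p) (ex h) (cup μ n p (ex f) (ex g))) := by
  rcases Nat.eq_zero_or_pos m with rfl | hm
  · have z : ∀ (l : ℕ), l < 2 → ∀ q, pc q l (ex μ) 0 = 0 :=
      fun l hl q => pcR_zero (ad_ex μ hl)
    have zl : ∀ q l G, pc q l (0 : (ℕ → L) → L) G = 0 := fun q l G => map_zero (pcL q l G)
    have zr : pc (p-1) n (pc n 0 (ex μ) (ex f)) 0 = 0 :=
      pcR_zero (ad_pc (ad_ex μ (j := 1) (by omega)) (ar_ex f) (by omega) (by omega))
    have zb : ∀ q r (a b c : (ℕ → L) → L), br2 0 q r a b c = 0 := by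
      intros; simp [br2_eq]
    have zb1 : ∀ q r (a b c : (ℕ → L) → L), br2 (0+1) q r a b c = 0 := by
      intros; simp [br2_eq]
    have zt : ∀ q (a b : (ℕ → L) → L), tc 0 q a b = 0 := by
      intros; simp [tc_eq]
    have zd : ∀ q, delta μ q 0 = 0 := by
      intro q
      rw [delta_eq, tc_eq, tc_eq]
      simp [zl, sum_range_succ, z]
    rw [zb1]
    simp [zb, zt, zd, cup_eq, z, zl, zr]
  · exact main_pos μ hm h f g

end OperadPrelude
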